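/- For every ε > 0 there exists a constant C_ε > 0 such that for all positive integers N, m, M with m ≤ 2N² and M ≤ 2N², one has |Σ_{y=1}^{M} Σ_{t} ψ((N − m·t)/y)| ≤ C_ε · M · N^ε, where the inner sum runs over integers t with 1 ≤ t ≤ y and gcd(t,y) = 1. -/

import Mathlib

/-- The saw-tooth function `ψ(t) = t − ⌊t⌋ − 1/2`. -/
noncomputable def psi (t : ℝ) : ℝ := t - ⌊t⌋ - 1 / 2

/-!
Detecting `gcd(t, y) = 1` by `∑ d ∣ gcd(t, y), μ d` turns the inner sum into complete sums
`∑ s mod k, ψ(x - m s / k)` over the divisors `k` of `y`. With `g = gcd(m, k)`, such a sum runs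
`g` times through the fractions of denominator `k / g`, so the distribution relation
`∑ s < q, ψ(x + s / q) = ψ(q x)` evaluates it as `g ψ(x k / g)`, and it is at most `g / 2` in
absolute value. It remains to sum `gcd(m, k)` over `k ∣ y ≤ M`: since
`∑ k ≤ M, gcd(m, k) / k ≤ ∑ e ∣ m, ∑ j ≤ M / e, 1 / j`, the total is at most
`M d(m) (1 + log M)`, and both `d(m)` and `log M` are `O(N ^ δ)` for every `δ > 0`.
-/

open Finset
open scoped ArithmeticFunction.Moebius

section FiniteSums

variable {R : Type*} [AddCommMonoid R]

lemma sum_range_natCast_zmod (q : ℕ) [NeZero q] (f : ZMod q → R) :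
    ∑ s ∈ range q, f s = ∑ z, f z :=
  sum_nbij' (fun s ↦ (s : ZMod q)) ZMod.val (by simp)
    (fun z _ ↦ mem_range.2 z.val_lt)
    (fun s hs ↦ ZMod.val_cast_of_lt (mem_range.1 hs))
    (fun z _ ↦ ZMod.natCast_zmod_val z) (fun _ _ ↦ rfl)

lemma sum_range_int_mul_of_isCoprime {f : ℤ → R} {q : ℕ} {a : ℤ}
    (hf : Function.Periodic f q) (ha : IsCoprime a q) :
    ∑ s ∈ range q, f (a * s) = ∑ s ∈ range q, f s := by
  rcases eq_or_ne q 0 with rfl | hq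
  · simp only [range_zero, sum_empty]
  have : NeZero q := ⟨hq⟩
  let F : ZMod q → R := fun z ↦ f z.cast
  have hF (n : ℤ) : F n = f n := by
    simp only [F, ZMod.coe_intCast, Int.emod_def, mul_comm (q : ℤ)]
    exact hf.sub_zsmul_eq (n / q)
  have ha_unit : IsUnit (a : ZMod q) := (ZMod.coe_int_isUnit_iff_isCoprime a q).2 ha.symm
  calc ∑ s ∈ range q, f (a * s)
      = ∑ s ∈ range q, F ((a : ZMod q) * (s : ZMod q)) :=
        sum_congr rfl fun s _ ↦ by rw [← hF]; push_cast; rfl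
    _ = ∑ z, F ((a : ZMod q) * z) := sum_range_natCast_zmod q fun z ↦ F (a * z)
    _ = ∑ z, F z := Equiv.sum_comp ha_unit.unit.mulLeft F
    _ = ∑ s ∈ range q, f s := by
        rw [← sum_range_natCast_zmod]
        exact sum_congr rfl fun s _ ↦ by rw [← hF]; push_cast; rfl

lemma sum_range_mul_of_periodic {f : ℕ → R} {q : ℕ}
    (hf : Function.Periodic f q) (g : ℕ) :
    ∑ s ∈ range (g * q), f s = g • ∑ s ∈ range q, f s := by
  induction g with
  | zero => simp
  | succ g ih =>
    have hshift (s : ℕ) : f (g * q + s) = f s := by rw [add_comm]; exact hf.nat_mul g s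
    rw [add_mul, one_mul, sum_range_add, ih, succ_nsmul]
    simp only [hshift]

lemma sum_Icc_one_eq_sum_range {f : ℕ → R} {k : ℕ}
    (h : f k = f 0) : ∑ s ∈ Icc 1 k, f s = ∑ s ∈ range k, f s := by
  cases k with
  | zero => rfl
  | succ n =>
    rw [sum_range_succ', ← h, range_eq_Ico, sum_Ico_add' f, zero_add,
      sum_Ico_add_eq_sum_Icc (by lia)]

lemma sum_Icc_ite_dvd {d : ℕ} (hd : d ≠ 0) (n : ℕ) (f : ℕ → R) :
    ∑ t ∈ Icc 1 n, (if d ∣ t then f t else 0) = ∑ s ∈ Icc 1 (n / d), f (d * s) := by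
  have hd_pos : 0 < d := Nat.pos_of_ne_zero hd
  rw [← sum_filter]
  refine (sum_nbij (d * ·) ?_ (fun a _ b _ h ↦ Nat.eq_of_mul_eq_mul_left hd_pos h) ?_
    fun _ _ ↦ rfl).symm
  · simp +contextual [Nat.le_div_iff_mul_le hd_pos, Nat.succ_le_iff, hd_pos, mul_comm d]
  · rintro t ht
    obtain ⟨⟨ht_pos, ht_le⟩, s, rfl⟩ : (1 ≤ t ∧ t ≤ n) ∧ d ∣ t := by simpa using ht
    refine ⟨s, ?_, rfl⟩
    simp [Nat.le_div_iff_mul_le hd_pos, Nat.pos_of_mul_pos_left ht_pos, Nat.succ_le_iff,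
      mul_comm s, ht_le]

lemma sum_Icc_sum_divisors (M : ℕ) (f : ℕ → R) :
    ∑ y ∈ Icc 1 M, ∑ k ∈ y.divisors, f k = ∑ k ∈ Icc 1 M, (M / k) • f k := by
  have h_swap : ∑ y ∈ Icc 1 M, ∑ k ∈ y.divisors, f k =
      ∑ k ∈ Icc 1 M, ∑ y ∈ Icc 1 M with k ∣ y, f k := by
    refine sum_comm' fun y k ↦ ?_
    simp only [mem_Icc, mem_filter, Nat.mem_divisors]
    constructor
    · rintro ⟨⟨hy_pos, hy_le⟩, hky, -⟩
      exact ⟨⟨⟨hy_pos, hy_le⟩, hky⟩, Nat.pos_of_dvd_of_pos hky hy_pos,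
        (Nat.le_of_dvd hy_pos hky).trans hy_le⟩
    · rintro ⟨⟨hy, hky⟩, -⟩
      exact ⟨hy, hky, (Nat.pos_of_ne_zero (by lia)).ne'⟩
  rw [h_swap]
  exact sum_congr rfl fun k _ ↦ by
    rw [sum_const]
    congr 1
    exact Nat.Ioc_filter_dvd_card_eq_div M k

end FiniteSums

lemma periodic_psi : Function.Periodic psi 1 := fun t ↦ by
  simp only [psi, Int.floor_add_one, Int.cast_add, Int.cast_one]; ring

lemma abs_psi_le (t : ℝ) : |psi t| ≤ 1 / 2 := by
  have h_nonneg := Int.floor_le t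
  have h_lt := Int.lt_floor_add_one t
  rw [psi, abs_le]
  constructor <;> linarith

lemma psi_eq_bernoulliFun_one {t : ℝ} (ht : t ∈ Set.Ico 0 1) : psi t = bernoulliFun 1 t := by
  rw [psi, Int.floor_eq_zero_iff.2 ht, bernoulliFun_one, Int.cast_zero, sub_zero]

lemma sum_range_psi_add_div {q : ℕ} (hq : q ≠ 0) (x : ℝ) :
    ∑ s ∈ range q, psi (x + s / q) = psi (q * x) := by
  have hq_pos : (0 : ℝ) < q := by positivity
  let D : ℝ → ℝ := fun u ↦ ∑ s ∈ range q, psi (u + s / q) - psi (q * u)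
  have hD_periodic : Function.Periodic D (1 / q) := fun u ↦ by
    have h_sum : ∑ s ∈ range q, psi (u + 1 / q + s / q) = ∑ s ∈ range q, psi (u + s / q) := by
      have h_last : psi (u + q / q) = psi u := by rw [div_self hq_pos.ne', periodic_psi]
      have h_split := sum_range_succ' (fun s : ℕ ↦ psi (u + s / q)) q
      rw [sum_range_succ, h_last, Nat.cast_zero, zero_div, add_zero] at h_split
      rw [add_right_cancel h_split]
      exact sum_congr rfl fun s _ ↦ by congr 1; push_cast; ring
    have h_mul : psi (q * (u + 1 / q)) = psi (q * u) := by
      rw [mul_add, mul_one_div_cancel hq_pos.ne', periodic_psi]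
    simp only [D, h_sum, h_mul]
  obtain ⟨u, ⟨hu_nonneg, hu_lt⟩, hxu⟩ := hD_periodic.exists_mem_Ico₀ (by positivity) x
  have hqu_lt : q * u < 1 := by rwa [lt_div_iff₀' hq_pos] at hu_lt
  have h_term : ∀ s ∈ range q, psi (u + s / q) = bernoulliFun 1 (u + s / q) := fun s hs ↦ by
    have hs_le : (s : ℝ) + 1 ≤ q := by exact_mod_cast mem_range.1 hs
    refine psi_eq_bernoulliFun_one ⟨by positivity, ?_⟩
    calc u + s / q < 1 / q + s / q := by gcongr
      _ = (s + 1) / q := by ring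
      _ ≤ 1 := (div_le_one hq_pos).2 hs_le
  have hD_u : D u = 0 := by
    simp only [D]
    rw [sum_congr rfl h_term, psi_eq_bernoulliFun_one ⟨by positivity, hqu_lt⟩,
      bernoulliFun_mul 1 hq, pow_one, div_self hq_pos.ne', one_mul, sub_self]
  exact sub_eq_zero.1 (hxu.trans hD_u)

lemma periodic_psi_add_int_div {k : ℕ} (hk : k ≠ 0) (x : ℝ) :
    Function.Periodic (fun n : ℤ ↦ psi (x + n / k)) k := fun n ↦ by
  have hk' : (k : ℝ) ≠ 0 := by exact_mod_cast hk
  simp only [Int.cast_add, Int.cast_natCast, add_div, div_self hk', ← add_assoc]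
  exact periodic_psi _

lemma sum_range_mul_psi_add_int_mul_div {q : ℕ} (hq : q ≠ 0) {a : ℤ} (ha : IsCoprime a q)
    (g : ℕ) (x : ℝ) : ∑ s ∈ range (g * q), psi (x + a * s / q) = g * psi (q * x) := by
  have h_periodic : Function.Periodic (fun s : ℕ ↦ psi (x + a * s / q)) q := fun s ↦ by
    have h := (periodic_psi_add_int_div hq x).int_mul a (a * s)
    push_cast [mul_add] at h ⊢
    exact h
  have h_period : ∑ s ∈ range q, psi (x + a * s / q) = ∑ s ∈ range q, psi (x + s / q) := by
    have h := sum_range_int_mul_of_isCoprime (periodic_psi_add_int_div hq x) ha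
    push_cast at h
    exact h
  rw [sum_range_mul_of_periodic h_periodic, nsmul_eq_mul, h_period, sum_range_psi_add_div hq]

lemma sum_range_psi_add_int_mul_div {k : ℕ} (hk : k ≠ 0) (m : ℤ) (x : ℝ) :
    ∑ s ∈ range k, psi (x + m * s / k) = m.gcd k * psi ((k / m.gcd k : ℕ) * x) := by
  have hg_pos : 0 < m.gcd k := Int.gcd_pos_of_ne_zero_right m (Nat.cast_ne_zero.2 hk)
  obtain ⟨a, ha⟩ := Int.gcd_dvd_left m k
  obtain ⟨q, hkq⟩ : m.gcd k ∣ k := Int.gcd_dvd_natAbs_right m k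
  have ha_coprime : IsCoprime a q := by
    have h := Int.gcd_ediv_gcd_ediv_gcd hg_pos
    have hkq_int : (k : ℤ) = m.gcd k * q := by exact_mod_cast hkq
    rwa [Int.ediv_eq_of_eq_mul_right (by lia) ha, Int.ediv_eq_of_eq_mul_right (by lia) hkq_int,
      ← Int.isCoprime_iff_gcd_eq_one] at h
  generalize m.gcd k = g at *
  subst hkq ha
  have h_cancel (s : ℕ) : ((g * a : ℤ) : ℝ) * s / (g * q : ℕ) = a * s / q := by
    push_cast
    field_simp
  simp only [h_cancel, Nat.mul_div_cancel_left q hg_pos]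
  exact sum_range_mul_psi_add_int_mul_div (right_ne_zero_of_mul hk) ha_coprime g x

lemma sum_Icc_psi_sub_int_mul_div {k : ℕ} (hk : k ≠ 0) (m : ℤ) (x : ℝ) :
    ∑ s ∈ Icc 1 k, psi ((x - m * s) / k) = m.gcd k * psi ((k / m.gcd k : ℕ) * (x / k)) := by
  have hk' : (k : ℝ) ≠ 0 := by exact_mod_cast hk
  have h_ends : psi ((x - m * k) / k) = psi ((x - m * (0 : ℕ)) / k) := by
    rw [sub_div, mul_div_cancel_right₀ _ hk', Nat.cast_zero, mul_zero, sub_zero]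
    simpa only [mul_one] using periodic_psi.sub_int_mul_eq (x := x / k) m
  have h_neg (s : ℕ) : (x - m * s) / k = x / k + (-m : ℤ) * s / k := by push_cast; ring
  rw [sum_Icc_one_eq_sum_range h_ends]
  simp only [h_neg, sum_range_psi_add_int_mul_div hk, Int.neg_gcd]

lemma abs_sum_Icc_psi_sub_int_mul_div_le {k : ℕ} (hk : k ≠ 0) (m : ℤ) (x : ℝ) :
    |∑ s ∈ Icc 1 k, psi ((x - m * s) / k)| ≤ m.gcd k / 2 := by
  rw [sum_Icc_psi_sub_int_mul_div hk, abs_mul, Nat.abs_cast, ← mul_one_div (m.gcd k : ℝ)]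
  exact mul_le_mul_of_nonneg_left (abs_psi_le _) (Nat.cast_nonneg _)

lemma sum_divisors_ite_dvd_moebius {y : ℕ} (hy : y ≠ 0) (t : ℕ) :
    ∑ d ∈ y.divisors, (if d ∣ t then μ d else 0) = if t.gcd y = 1 then 1 else 0 := by
  have h_filter : {d ∈ y.divisors | d ∣ t} = (t.gcd y).divisors := by
    ext d
    simp [Nat.dvd_gcd_iff, hy, and_comm]
  rw [← sum_filter, h_filter, ← ArithmeticFunction.coe_zeta_mul_apply,
    ArithmeticFunction.coe_zeta_mul_moebius, ArithmeticFunction.one_apply]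

lemma sum_Icc_ite_gcd_eq_one {y : ℕ} (hy : y ≠ 0) (n : ℕ) (f : ℕ → ℝ) :
    ∑ t ∈ Icc 1 n, (if t.gcd y = 1 then f t else 0) =
      ∑ d ∈ y.divisors, (μ d : ℝ) * ∑ s ∈ Icc 1 (n / d), f (d * s) := by
  calc ∑ t ∈ Icc 1 n, (if t.gcd y = 1 then f t else 0)
      = ∑ t ∈ Icc 1 n, ∑ d ∈ y.divisors, (if d ∣ t then (μ d : ℝ) * f t else 0) := by
        refine sum_congr rfl fun t _ ↦ ?_
        have h := congrArg (fun z : ℤ ↦ (z : ℝ) * f t) (sum_divisors_ite_dvd_moebius hy t)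
        push_cast at h
        simpa only [sum_mul, ite_mul, one_mul, zero_mul] using h.symm
    _ = ∑ d ∈ y.divisors, ∑ t ∈ Icc 1 n, (if d ∣ t then (μ d : ℝ) * f t else 0) := sum_comm
    _ = ∑ d ∈ y.divisors, (μ d : ℝ) * ∑ s ∈ Icc 1 (n / d), f (d * s) :=
        sum_congr rfl fun d hd ↦ by
          rw [sum_Icc_ite_dvd (Nat.pos_of_mem_divisors hd).ne', mul_sum]

lemma sum_Icc_inv_le_one_add_log {n M : ℕ} (h : n ≤ M) :
    ∑ s ∈ Icc 1 n, (s : ℝ)⁻¹ ≤ 1 + Real.log M := by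
  calc ∑ s ∈ Icc 1 n, (s : ℝ)⁻¹ ≤ ∑ s ∈ Icc 1 M, (s : ℝ)⁻¹ :=
        sum_le_sum_of_subset_of_nonneg (Icc_subset_Icc_right h) fun _ _ _ ↦ by positivity
    _ = (harmonic M : ℝ) := by rw [harmonic_eq_sum_Icc]; push_cast; rfl
    _ ≤ 1 + Real.log M := harmonic_le_one_add_log M

lemma sum_Icc_gcd_div_le {m : ℕ} (hm : m ≠ 0) (M : ℕ) :
    ∑ k ∈ Icc 1 M, (m.gcd k : ℝ) / k ≤ #m.divisors * (1 + Real.log M) := by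
  have h_gcd_le (k : ℕ) :
      (m.gcd k : ℝ) / k ≤ ∑ e ∈ m.divisors, if e ∣ k then (e : ℝ) / k else 0 := by
    have h := single_le_sum (s := m.divisors) (f := fun e ↦ if e ∣ k then (e : ℝ) / k else 0)
      (fun e _ ↦ by positivity) (Nat.mem_divisors.2 ⟨m.gcd_dvd_left k, hm⟩)
    simpa only [m.gcd_dvd_right k, if_true] using h
  have h_multiples_le (e : ℕ) (he : e ∈ m.divisors) :
      ∑ k ∈ Icc 1 M, (if e ∣ k then (e : ℝ) / k else 0) ≤ 1 + Real.log M := by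
    have he_ne : e ≠ 0 := (Nat.pos_of_mem_divisors he).ne'
    rw [sum_Icc_ite_dvd he_ne M fun k ↦ (e : ℝ) / k]
    convert sum_Icc_inv_le_one_add_log (M.div_le_self e) using 2 with s
    push_cast
    field_simp
  calc ∑ k ∈ Icc 1 M, (m.gcd k : ℝ) / k
      ≤ ∑ k ∈ Icc 1 M, ∑ e ∈ m.divisors, (if e ∣ k then (e : ℝ) / k else 0) :=
        sum_le_sum fun k _ ↦ h_gcd_le k
    _ = ∑ e ∈ m.divisors, ∑ k ∈ Icc 1 M, (if e ∣ k then (e : ℝ) / k else 0) := sum_comm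
    _ ≤ #m.divisors • (1 + Real.log M) := sum_le_card_nsmul _ _ _ h_multiples_le
    _ = #m.divisors * (1 + Real.log M) := nsmul_eq_mul _ _

lemma sum_Icc_sum_divisors_gcd_le {m : ℕ} (hm : m ≠ 0) (M : ℕ) :
    ∑ y ∈ Icc 1 M, ∑ k ∈ y.divisors, (m.gcd k : ℝ) ≤ M * (#m.divisors * (1 + Real.log M)) := by
  calc ∑ y ∈ Icc 1 M, ∑ k ∈ y.divisors, (m.gcd k : ℝ)
      = ∑ k ∈ Icc 1 M, ((M / k : ℕ) : ℝ) * m.gcd k := by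
        simp only [sum_Icc_sum_divisors, nsmul_eq_mul]
    _ ≤ ∑ k ∈ Icc 1 M, (M : ℝ) / k * m.gcd k :=
        sum_le_sum fun k _ ↦ by gcongr; exact Nat.cast_div_le
    _ = M * ∑ k ∈ Icc 1 M, (m.gcd k : ℝ) / k := by
        rw [mul_sum]
        exact sum_congr rfl fun k _ ↦ by ring
    _ ≤ M * (#m.divisors * (1 + Real.log M)) := by gcongr; exact sum_Icc_gcd_div_le hm M

lemma natCast_add_one_le_mul_one_add_pow {c : ℝ} (hc : 0 < c) (e : ℕ) :
    (e : ℝ) + 1 ≤ (1 + 1 / c) * (1 + c) ^ e := by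
  calc (e : ℝ) + 1 ≤ e + 1 + (e * c + 1 / c) := le_add_of_nonneg_right (by positivity)
    _ = (1 + 1 / c) * (1 + e * c) := by field_simp; ring
    _ ≤ (1 + 1 / c) * (1 + c) ^ e := by gcongr; exact one_add_mul_le_pow (by linarith) e

lemma natCast_add_one_le_pow {b : ℝ} (hb : 2 ≤ b) (e : ℕ) : (e : ℝ) + 1 ≤ b ^ e := by
  calc (e : ℝ) + 1 ≤ 2 ^ e := by exact_mod_cast e.lt_two_pow_self
    _ ≤ b ^ e := by gcongr

lemma natCast_rpow_eq_prod_primeFactors {n : ℕ} (hn : n ≠ 0) (δ : ℝ) :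
    (n : ℝ) ^ δ = ∏ p ∈ n.primeFactors, ((p : ℝ) ^ δ) ^ n.factorization p := by
  conv_lhs => rw [Nat.prod_primeFactors_pow_factorization hn]
  push_cast
  rw [← Real.finsetProd_rpow _ _ fun _ _ ↦ by positivity]
  exact prod_congr rfl fun p _ ↦ Real.rpow_pow_comm p.cast_nonneg δ _ |>.symm

lemma exists_card_divisors_le_mul_rpow {δ : ℝ} (hδ : 0 < δ) :
    ∃ C : ℝ, 0 < C ∧ ∀ n : ℕ, n ≠ 0 → (#n.divisors : ℝ) ≤ C * (n : ℝ) ^ δ := by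
  set c : ℝ := 2 ^ δ - 1
  have hc : 0 < c := sub_pos.2 (Real.one_lt_rpow one_lt_two hδ)
  set A : ℝ := 1 + 1 / c
  have hA : 1 ≤ A := le_add_of_nonneg_right (by positivity)
  set P : ℕ := ⌈(2 : ℝ) ^ δ⁻¹⌉₊
  have h_prime {p : ℕ} (hp : p.Prime) (e : ℕ) :
      (e : ℝ) + 1 ≤ (if p < P then A else 1) * ((p : ℝ) ^ δ) ^ e := by
    split_ifs with hpP
    · have h_base : 1 + c ≤ (p : ℝ) ^ δ := by
        have hp_two : (2 : ℝ) ≤ p := by exact_mod_cast hp.two_le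
        rw [add_sub_cancel]
        gcongr
      exact (natCast_add_one_le_mul_one_add_pow hc e).trans (by gcongr)
    · have h_base : 2 ≤ (p : ℝ) ^ δ :=
        (Real.rpow_inv_le_iff_of_pos zero_le_two p.cast_nonneg hδ).1
          (Nat.ceil_le.1 (not_lt.1 hpP))
      rw [one_mul]
      exact natCast_add_one_le_pow h_base e
  refine ⟨A ^ P, by positivity, fun n hn ↦ ?_⟩
  have h_const : ∏ p ∈ n.primeFactors, (if p < P then A else 1) ≤ A ^ P := by
    have h_card : #{p ∈ n.primeFactors | p < P} ≤ P := by
      calc _ ≤ #(range P) := card_le_card fun p hp ↦ mem_range.2 (mem_filter.1 hp).2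
        _ = P := card_range P
    rw [← prod_filter, prod_const]
    exact pow_le_pow_right₀ hA h_card
  calc (#n.divisors : ℝ) = ∏ p ∈ n.primeFactors, ((n.factorization p : ℝ) + 1) := by
        rw [Nat.card_divisors hn]; push_cast; rfl
    _ ≤ ∏ p ∈ n.primeFactors,
          ((if p < P then A else 1) * ((p : ℝ) ^ δ) ^ n.factorization p) :=
        prod_le_prod (fun _ _ ↦ by positivity) fun p hp ↦
          h_prime (Nat.prime_of_mem_primeFactors hp) _
    _ = (∏ p ∈ n.primeFactors, (if p < P then A else 1)) * (n : ℝ) ^ δ := by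
        rw [prod_mul_distrib, ← natCast_rpow_eq_prod_primeFactors hn]
    _ ≤ A ^ P * (n : ℝ) ^ δ := by gcongr

lemma abs_sum_Icc_coprime_psi_le {y : ℕ} (hy : y ≠ 0) (m : ℤ) (x : ℝ) :
    |∑ t ∈ Icc 1 y, if t.gcd y = 1 then psi ((x - m * t) / y) else 0| ≤
      ∑ k ∈ y.divisors, (m.natAbs.gcd k : ℝ) / 2 := by
  have h_term (d : ℕ) (hd : d ∈ y.divisors) :
      |(μ d : ℝ) * ∑ s ∈ Icc 1 (y / d), psi ((x - m * (d * s : ℕ)) / y)| ≤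
        (m.natAbs.gcd (y / d) : ℝ) / 2 := by
    obtain ⟨k, rfl⟩ := Nat.dvd_of_mem_divisors hd
    obtain ⟨hd_ne, hk_ne⟩ := mul_ne_zero_iff.1 hy
    have h_rescale (s : ℕ) :
        (x - m * (d * s : ℕ)) / (d * k : ℕ) = (x / d - m * s) / k := by
      push_cast
      field_simp
    have h_moebius : |(μ d : ℝ)| ≤ 1 := by exact_mod_cast ArithmeticFunction.abs_moebius_le_one
    simp only [h_rescale, Nat.mul_div_cancel_left k (Nat.pos_of_ne_zero hd_ne), abs_mul]
    exact (mul_le_of_le_one_left (abs_nonneg _) h_moebius).trans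
      (abs_sum_Icc_psi_sub_int_mul_div_le hk_ne m (x / d))
  calc |∑ t ∈ Icc 1 y, if t.gcd y = 1 then psi ((x - m * t) / y) else 0|
      = |∑ d ∈ y.divisors, (μ d : ℝ) * ∑ s ∈ Icc 1 (y / d), psi ((x - m * (d * s : ℕ)) / y)| := by
        rw [sum_Icc_ite_gcd_eq_one hy]
    _ ≤ ∑ d ∈ y.divisors, (m.natAbs.gcd (y / d) : ℝ) / 2 :=
        (abs_sum_le_sum_abs _ _).trans (sum_le_sum h_term)
    _ = ∑ k ∈ y.divisors, (m.natAbs.gcd k : ℝ) / 2 :=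
        y.sum_div_divisors fun k ↦ (m.natAbs.gcd k : ℝ) / 2

lemma abs_sum_Icc_sum_Icc_coprime_psi_le {m : ℤ} (hm : m ≠ 0) (M : ℕ) (x : ℕ → ℝ) :
    |∑ y ∈ Icc 1 M, ∑ t ∈ Icc 1 y, if t.gcd y = 1 then psi ((x y - m * t) / y) else 0| ≤
      M * (#m.natAbs.divisors * (1 + Real.log M)) / 2 := by
  calc |∑ y ∈ Icc 1 M, ∑ t ∈ Icc 1 y, if t.gcd y = 1 then psi ((x y - m * t) / y) else 0|
      ≤ ∑ y ∈ Icc 1 M, ∑ k ∈ y.divisors, (m.natAbs.gcd k : ℝ) / 2 :=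
        (abs_sum_le_sum_abs _ _).trans <| sum_le_sum fun y hy ↦
          abs_sum_Icc_coprime_psi_le (Nat.pos_iff_ne_zero.1 (mem_Icc.1 hy).1) m (x y)
    _ = (∑ y ∈ Icc 1 M, ∑ k ∈ y.divisors, (m.natAbs.gcd k : ℝ)) / 2 := by
        simp only [sum_div]
    _ ≤ M * (#m.natAbs.divisors * (1 + Real.log M)) / 2 := by
        gcongr
        exact sum_Icc_sum_divisors_gcd_le (Int.natAbs_ne_zero.2 hm) M

lemma one_add_log_le_mul_rpow {x z δ : ℝ} (hx : 0 ≤ x) (hxz : x ≤ z) (hz : 1 ≤ z) (hδ : 0 < δ) :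
    1 + Real.log x ≤ (1 + 1 / δ) * z ^ δ := by
  calc 1 + Real.log x ≤ z ^ δ + x ^ δ / δ :=
        add_le_add (Real.one_le_rpow hz hδ.le) (Real.log_le_rpow_div hx hδ)
    _ ≤ z ^ δ + z ^ δ / δ := by gcongr
    _ = (1 + 1 / δ) * z ^ δ := by ring

lemma two_mul_sq_rpow_mul_self {X ε : ℝ} (hX : 0 ≤ X) (hε : 0 ≤ ε) :
    (2 * X ^ 2) ^ (ε / 4) * (2 * X ^ 2) ^ (ε / 4) = 2 ^ (ε / 2) * X ^ ε := by
  rw [← Real.rpow_add_of_nonneg (by positivity) (by positivity) (by positivity),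
    Real.mul_rpow zero_le_two (by positivity), ← Real.rpow_natCast_mul hX]
  congr 2 <;> push_cast <;> ring

theorem stmt11_general {ε : ℝ} (hε : 0 < ε) :
    ∃ C : ℝ, 0 < C ∧ ∀ (X : ℝ) (m : ℤ) (M : ℕ) (x : ℕ → ℝ),
      0 ≤ X → m ≠ 0 → |(m : ℝ)| ≤ 2 * X ^ 2 → (M : ℝ) ≤ 2 * X ^ 2 →
        |∑ y ∈ Icc 1 M, ∑ t ∈ Icc 1 y,
            if Nat.gcd t y = 1 then psi ((x y - m * t) / y) else 0| ≤ C * M * X ^ ε := by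
  have hδ : 0 < ε / 4 := by positivity
  obtain ⟨C, hC, h_divisors⟩ := exists_card_divisors_le_mul_rpow hδ
  refine ⟨C * (1 + 1 / (ε / 4)) * 2 ^ (ε / 2) / 2, by positivity, ?_⟩
  intro X m M x hX hm hmX hMX
  set Z : ℝ := 2 * X ^ 2
  have h_natAbs_le : (m.natAbs : ℝ) ≤ Z := by rwa [Nat.cast_natAbs, Int.cast_abs]
  have hZ : 1 ≤ Z := le_trans (by exact_mod_cast Int.natAbs_pos.2 hm) h_natAbs_le
  have h_card : (#m.natAbs.divisors : ℝ) ≤ C * Z ^ (ε / 4) :=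
    (h_divisors _ (Int.natAbs_ne_zero.2 hm)).trans (by gcongr)
  have h_log : 1 + Real.log M ≤ (1 + 1 / (ε / 4)) * Z ^ (ε / 4) :=
    one_add_log_le_mul_rpow M.cast_nonneg hMX hZ hδ
  calc _ ≤ M * (#m.natAbs.divisors * (1 + Real.log M)) / 2 :=
        abs_sum_Icc_sum_Icc_coprime_psi_le hm M x
    _ ≤ M * (C * Z ^ (ε / 4) * ((1 + 1 / (ε / 4)) * Z ^ (ε / 4))) / 2 := by gcongr
    _ = C * (1 + 1 / (ε / 4)) * (Z ^ (ε / 4) * Z ^ (ε / 4)) / 2 * M := by ring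
    _ = C * (1 + 1 / (ε / 4)) * 2 ^ (ε / 2) / 2 * M * X ^ ε := by
        rw [two_mul_sq_rpow_mul_self hX hε.le]; ring

theorem stmt11 :
    ∀ ε : ℝ, 0 < ε → ∃ C : ℝ, 0 < C ∧
      ∀ N m M : ℕ, 0 < N → 0 < m → 0 < M → m ≤ 2 * N ^ 2 → M ≤ 2 * N ^ 2 →
        |∑ y ∈ Finset.Icc 1 M, ∑ t ∈ Finset.Icc 1 y,
            if Nat.gcd t y = 1 then psi (((N : ℝ) - (m : ℝ) * (t : ℝ)) / (y : ℝ)) else 0| ≤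
          C * (M : ℝ) * (N : ℝ) ^ ε := by
  intro ε hε
  obtain ⟨C, hC, h⟩ := stmt11_general hε
  exact ⟨C, hC, fun N m M _ hm _ hmN hMN ↦ h N m M (fun _ ↦ N) N.cast_nonneg
    (by exact_mod_cast hm.ne') (by rw [Int.cast_natCast, Nat.abs_cast]; exact_mod_cast hmN)
    (by exact_mod_cast hMN)⟩
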